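/- arXiv:2201.10418 — 3 statements merged into one kernel-verified Lean document; each statement's English description precedes it below -/
import Mathlib

section
/- Let m ≥ 4 and let ε ∈ [0,1]. Every strategyproof SDS that is anonymous, neutral, (1−ε)/m-ex post efficient, and exactly ε-randomly dictatorial is a convex combination of the uniform random dictatorship and the uniform lottery. -/
open Finset

noncomputable section

/-- A preference profile: each voter's strict linear order on the `m`
alternatives is encoded as a ranking permutation, where `R i x` is the rank of
alternative `x` for voter `i` (rank `0` = most preferred). Voter `i` strictly
prefers `x` to `y` iff `R i x < R i y`. -/
abbrev Profile (n m : ℕ) := Fin n → Equiv.Perm (Fin m)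

/-- `F R x` is the probability that the social decision scheme `F` assigns to
alternative `x` at profile `R`; `IsSDS F` says every `F R` is a lottery. -/
def IsSDS {n m : ℕ} (F : Profile n m → Fin m → ℝ) : Prop :=
  (∀ R x, 0 ≤ F R x) ∧ ∀ R, ∑ x, F R x = 1

/-- Stochastic-dominance preference of voter `i` (with preferences as in `R`):
lottery `p` is weakly preferred to lottery `q`. -/
def SDPref {n m : ℕ} (R : Profile n m) (i : Fin n) (p q : Fin m → ℝ) : Prop :=
  ∀ x : Fin m,
    ∑ y ∈ univ.filter (fun y => R i y < R i x), q y ≤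
      ∑ y ∈ univ.filter (fun y => R i y < R i x), p y

/-- Strategyproofness: the truthful outcome is SD-preferred to any outcome
obtainable by a unilateral deviation. -/
def Strategyproof {n m : ℕ} (F : Profile n m → Fin m → ℝ) : Prop :=
  ∀ (R R' : Profile n m) (i : Fin n),
    (∀ j, j ≠ i → R j = R' j) → SDPref R i (F R) (F R')

/-- Anonymity: permuting the voters does not change the outcome. -/
def Anonymous {n m : ℕ} (F : Profile n m → Fin m → ℝ) : Prop :=
  ∀ (π : Equiv.Perm (Fin n)) (R : Profile n m), F (fun i => R (π i)) = F R

/-- The profile obtained from `R` by relabeling the alternatives by `τ`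
(in `relabel τ R`, alternative `τ x` gets the rank that `x` has in `R`). -/
def relabel {n m : ℕ} (τ : Equiv.Perm (Fin m)) (R : Profile n m) : Profile n m :=
  fun i => τ.symm.trans (R i)

/-- Neutrality: relabeling the alternatives permutes the outcome accordingly. -/
def Neutral {n m : ℕ} (F : Profile n m → Fin m → ℝ) : Prop :=
  ∀ (τ : Equiv.Perm (Fin m)) (R : Profile n m) (x : Fin m),
    F (relabel τ R) (τ x) = F R x

/-- The supporting size `n_{xy}(R)`: the number of voters preferring `x` to `y`. -/
def suppSize {n m : ℕ} (R : Profile n m) (x y : Fin m) : ℕ :=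
  (univ.filter (fun i => R i x < R i y)).card

/-- `x` is the Condorcet winner of `R`. -/
def CondorcetWinner {n m : ℕ} (R : Profile n m) (x : Fin m) : Prop :=
  ∀ y, y ≠ x → suppSize R y x < suppSize R x y

/-- `α`-Condorcet-consistency. -/
def CondorcetConsistent {n m : ℕ} (F : Profile n m → Fin m → ℝ) (α : ℝ) : Prop :=
  ∀ R x, CondorcetWinner R x → α ≤ F R x

/-- `x` is Pareto-dominated in `R`. -/
def ParetoDominated {n m : ℕ} (R : Profile n m) (x : Fin m) : Prop :=
  ∃ y, ∀ i, R i y < R i x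

/-- `β`-ex post efficiency. -/
def ExPostEff {n m : ℕ} (F : Profile n m → Fin m → ℝ) (β : ℝ) : Prop :=
  ∀ R x, ParetoDominated R x → F R x ≤ β

/-- The probability that the dictatorial SDS of voter `i` assigns to `x`:
`1` if `x` is voter `i`'s most preferred alternative and `0` otherwise. -/
def dictProb {n m : ℕ} (R : Profile n m) (i : Fin n) (x : Fin m) : ℝ :=
  if ∀ y, R i x ≤ R i y then 1 else 0

/-- `d` is a random dictatorship. -/
def IsRandDict {n m : ℕ} (d : Profile n m → Fin m → ℝ) : Prop :=
  ∃ δ : Fin n → ℝ, (∀ i, 0 ≤ δ i) ∧ ∑ i, δ i = 1 ∧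
    ∀ R x, d R x = ∑ i, δ i * dictProb R i x

/-- `F` can be written as `γ d + (1 - γ) g` with `d` a random dictatorship and
`g` a strategyproof SDS. -/
def DecomposesAt {n m : ℕ} (F : Profile n m → Fin m → ℝ) (γ : ℝ) : Prop :=
  ∃ d g : Profile n m → Fin m → ℝ, IsRandDict d ∧ IsSDS g ∧ Strategyproof g ∧
    ∀ R x, F R x = γ * d R x + (1 - γ) * g R x

/-- `F` is `γ`-randomly dictatorial: `γ ∈ [0,1]` is the maximal value admitting
a decomposition `F = γ d + (1 - γ) g` as above. -/
def RandDictDegree {n m : ℕ} (F : Profile n m → Fin m → ℝ) (γ : ℝ) : Prop :=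
  0 ≤ γ ∧ γ ≤ 1 ∧ DecomposesAt F γ ∧
    ∀ γ', 0 ≤ γ' → γ' ≤ 1 → DecomposesAt F γ' → γ' ≤ γ

/-- The profile `R^{i:yx}` obtained from `R` by swapping `x` and `y` in voter
`i`'s preference relation (used when `x` is ranked directly above `y`). -/
def swapTop {n m : ℕ} (R : Profile n m) (i : Fin n) (x y : Fin m) : Profile n m :=
  Function.update R i ((R i).trans (Equiv.swap (R i x) (R i y)))

/-- The weight vector `b` defining the randomized Copeland rule:
`b k = 2/(m(m-1))` for `k > n/2`, `b k = 1/(m(m-1))` for `k = n/2`, `b k = 0`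
for `k < n/2`. -/
def copelandWeight (n m : ℕ) (k : ℕ) : ℝ :=
  if n < 2 * k then 2 / ((m : ℝ) * ((m : ℝ) - 1))
  else if 2 * k = n then 1 / ((m : ℝ) * ((m : ℝ) - 1))
  else 0

/-- The randomized Copeland rule `f_C(R, x) = ∑_{y ≠ x} b_{n_{xy}(R)}`. -/
def randCopeland (n m : ℕ) : Profile n m → Fin m → ℝ :=
  fun R x => ∑ y ∈ univ.filter (fun y => y ≠ x), copelandWeight n m (suppSize R x y)

/-- A point voting SDS, given by a scoring vector `a` (indexed by ranks
`0, …, m-1`, i.e. `a k` is the score of the `(k+1)`-st ranked alternative). -/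
structure PointVoting (n m : ℕ) where
  a : ℕ → ℝ
  mono : ∀ k l : ℕ, k ≤ l → l < m → a l ≤ a k
  nonneg : ∀ k : ℕ, k < m → 0 ≤ a k
  sum_eq : ∑ k ∈ Finset.range m, a k = 1 / (n : ℝ)

/-- The value of a point voting SDS. -/
def pvVal {n m : ℕ} (pv : PointVoting n m) : Profile n m → Fin m → ℝ :=
  fun R x => ∑ i, pv.a (R i x : ℕ)

/-- A supporting size SDS, given by a vector `b` indexed by supporting sizes
`0, …, n`. -/
structure SupportingSize (n m : ℕ) where
  b : ℕ → ℝ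
  mono : ∀ k l : ℕ, k ≤ l → l ≤ n → b k ≤ b l
  nonneg : ∀ k : ℕ, k ≤ n → 0 ≤ b k
  pair_eq : ∀ k : ℕ, k ≤ n → b k + b (n - k) = 2 / ((m : ℝ) * ((m : ℝ) - 1))

/-- The value of a supporting size SDS. -/
def ssVal {n m : ℕ} (S : SupportingSize n m) : Profile n m → Fin m → ℝ :=
  fun R x => ∑ y ∈ univ.filter (fun y => y ≠ x), S.b (suppSize R x y)

/-- A duple: a strategyproof SDS that puts positive probability on at most two
fixed alternatives. -/
def IsDuple {n m : ℕ} (g : Profile n m → Fin m → ℝ) : Prop :=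
  IsSDS g ∧ Strategyproof g ∧ ∃ x y : Fin m, ∀ R z, z ≠ x → z ≠ y → g R z = 0

/-- A unilateral: a strategyproof SDS that depends only on the preferences of a
single fixed voter. -/
def IsUnilateral {n m : ℕ} (g : Profile n m → Fin m → ℝ) : Prop :=
  IsSDS g ∧ Strategyproof g ∧
    ∃ i : Fin n, ∀ R R' : Profile n m, R i = R' i → g R = g R'

/-- `F` is a convex combination of SDSs satisfying the property `P`. -/
def MixOf {n m : ℕ} (P : (Profile n m → Fin m → ℝ) → Prop)
    (F : Profile n m → Fin m → ℝ) : Prop :=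
  ∃ (K : ℕ) (w : Fin K → ℝ) (g : Fin K → Profile n m → Fin m → ℝ),
    (∀ k, 0 ≤ w k) ∧ ∑ k, w k = 1 ∧ (∀ k, P (g k)) ∧
    ∀ R x, F R x = ∑ k, w k * g k R x

/-- The uniform random dictatorship. -/
def uniformRD (n m : ℕ) : Profile n m → Fin m → ℝ :=
  fun R x => (1 / (n : ℝ)) * ∑ i, dictProb R i x

/-- The uniform lottery. -/
def uniformLottery (n m : ℕ) : Profile n m → Fin m → ℝ :=
  fun _ _ => 1 / (m : ℝ)

/-!
Strategyproofness amounts to Gibbard's two local conditions: when a voter swaps two alternatives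
that are adjacent in her ranking, probability moves only between these two, and it moves towards the
one that is raised. For an anonymous and neutral scheme the amount moved depends only on the two
ranks and on the number `k + 1` of voters supporting the lowered alternative; call it `D a b k` for
the ranks `a ⋖ b`. Moving an alternative down past two others along the two sides of the braid
relation gives the same total loss, whence `D a b k - D a b l` is the same for all pairs of
consecutive ranks.

Let `δ` be the minimum of `D 0 1`. Then `n δ` times the uniform random dictatorship can be split
off, so that `n δ ≤ ε`. Let `h a` be the probability of rank `a` at the unanimous profile. Each gap
`h a - h b` of consecutive ranks is at least `B := h 0 - h 1 - n δ ≥ 0`. Efficiency bounds `h 1` by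
`(1 - n δ) / m`, which forces `∑_{a ≠ 0} (h 1 - h a) ≤ B`, but the term of rank `3` alone is at
least `2 B`. Hence `B = 0`, every `D a b k` agrees with that of `n δ` times the uniform random
dictatorship, and what remains of the scheme is constant.
-/

section Development

variable {n m : ℕ} {R Q : Profile n m} {i j : Fin n} {x y z w : Fin m}
  {F : Profile n m → Fin m → ℝ}

/-! ### Adjacent swaps -/

lemma swapTop_eq_update (R : Profile n m) (i : Fin n) (x y : Fin m) :
    swapTop R i x y = Function.update R i (R i * Equiv.swap x y) := by
  rw [swapTop, Equiv.mul_swap_eq_swap_mul]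
  rfl

lemma swapTop_self : swapTop R i x y i = R i * Equiv.swap x y := by
  simp [swapTop_eq_update]

lemma swapTop_of_ne (h : j ≠ i) : swapTop R i x y j = R j := by
  simp [swapTop_eq_update, h]

lemma swapTop_apply_left : swapTop R i x y i x = R i y := by
  simp [swapTop_self]

lemma swapTop_apply_right : swapTop R i x y i y = R i x := by
  simp [swapTop_self]

lemma swapTop_apply_of_ne_of_ne (hx : z ≠ x) (hy : z ≠ y) : swapTop R i x y j z = R j z := by
  by_cases h : j = i
  · subst h
    simp [swapTop_self, Equiv.swap_apply_of_ne_of_ne hx hy]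
  · rw [swapTop_of_ne h]

lemma swapTop_comm (h : i ≠ j) :
    swapTop (swapTop R i x y) j z w = swapTop (swapTop R j z w) i x y := by
  simp only [swapTop_eq_update, Function.update_of_ne h, Function.update_of_ne h.symm]
  exact Function.update_comm h _ _ _

lemma swapTop_braid (hxy : x ≠ y) (hyz : y ≠ z) :
    swapTop (swapTop (swapTop R i x y) i x z) i y z =
      swapTop (swapTop (swapTop R i y z) i x z) i x y := by
  have hleft : Equiv.swap x y * (Equiv.swap x z * Equiv.swap y z) = Equiv.swap x z := by
    rw [Equiv.mul_swap_eq_swap_mul, Equiv.swap_apply_right,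
      Equiv.swap_apply_of_ne_of_ne hxy.symm hyz, Equiv.swap_comm y x, Equiv.swap_mul_self_mul]
  have hright : Equiv.swap y z * (Equiv.swap x z * Equiv.swap x y) = Equiv.swap x z := by
    rw [Equiv.mul_swap_eq_swap_mul, Equiv.swap_apply_left,
      Equiv.swap_apply_of_ne_of_ne hxy.symm hyz, Equiv.swap_comm z y, Equiv.swap_mul_self_mul]
  simp only [swapTop_eq_update, Function.update_self, Function.update_idem, mul_assoc, hleft,
    hright]

lemma covBy_iff_val_add_one {a b : Fin m} : a ⋖ b ↔ (a : ℕ) + 1 = b := by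
  rw [Fin.covBy_iff, Order.covBy_iff_add_one_eq]

lemma swapTop_lt_swapTop_iff (hxy : R i x ⋖ R i y) (h : j = i → s(z, w) ≠ s(x, y)) :
    swapTop R i x y j z < swapTop R i x y j w ↔ R j z < R j w := by
  rcases eq_or_ne j i with rfl | hj
  · have hne : ¬(z = x ∧ w = y) ∧ ¬(z = y ∧ w = x) := by simpa using h rfl
    have hinj (u v : Fin m) : (R j u : ℕ) = R j v ↔ u = v := by
      rw [← Fin.ext_iff, (R j).injective.eq_iff]
    have := hinj z x
    have := hinj z y
    have := hinj w x
    have := hinj w y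
    rw [covBy_iff_val_add_one] at hxy
    simp only [swapTop_self, Equiv.Perm.mul_apply, Equiv.swap_apply_def, Fin.lt_def]
    grind
  · rw [swapTop_of_ne hj]

lemma ne_of_covBy (h : R i x ⋖ R i y) : x ≠ y :=
  fun hxy => h.lt.ne (congrArg _ hxy)

/-- The triples `(j, x, y)` such that voter `j` prefers `x` to `y` in `Q` but `y` to `x` in `R`. It
measures the distance between the two profiles. -/
def discordance (Q R : Profile n m) : Finset (Fin n × Fin m × Fin m) :=
  {t | Q t.1 t.2.1 < Q t.1 t.2.2 ∧ R t.1 t.2.2 < R t.1 t.2.1}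

lemma discordance_swapTop_ssubset (hxy : R i x ⋖ R i y) (hQ : Q i y < Q i x) :
    discordance Q (swapTop R i x y) ⊂ discordance Q R := by
  rw [Finset.ssubset_iff_of_subset]
  · refine ⟨(i, y, x), by simp [discordance, hQ, hxy.lt], ?_⟩
    simp [discordance, swapTop_apply_left, swapTop_apply_right, hxy.lt.le]
  · rintro ⟨j, z, w⟩
    simp only [discordance, mem_filter, mem_univ, true_and]
    rintro ⟨hzw, hwz⟩
    refine ⟨hzw, (swapTop_lt_swapTop_iff hxy ?_).1 hwz⟩
    rintro rfl hpair
    rcases Sym2.eq_iff.1 hpair with ⟨rfl, rfl⟩ | ⟨rfl, rfl⟩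
    · simp only [swapTop_apply_left, swapTop_apply_right] at hwz
      exact hwz.not_gt hxy.lt
    · exact hzw.not_gt hQ

lemma perm_eq_one_of_strictMono {e : Equiv.Perm (Fin m)} (he : StrictMono e) : e = 1 := by
  have hid := Subsingleton.elim (he.orderIsoOfSurjective e e.surjective) (OrderIso.refl _)
  exact Equiv.ext fun a => DFunLike.congr_fun hid a

lemma exists_discordant_covBy (h : R ≠ Q) :
    ∃ i x y, R i x ⋖ R i y ∧ Q i y < Q i x := by
  obtain ⟨i, hi⟩ := Function.ne_iff.1 h
  by_contra! hno
  have hmono : StrictMono (Q i * (R i)⁻¹) := by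
    refine (strictMono_iff_forall_covBy _).2 fun a b hab => ?_
    have hle := hno i ((R i)⁻¹ a) ((R i)⁻¹ b) (by simpa using hab)
    exact hle.lt_of_ne ((Q i * (R i)⁻¹).injective.ne hab.ne)
  exact hi (mul_inv_eq_one.1 (perm_eq_one_of_strictMono hmono)).symm

theorem profile_induction (Q : Profile n m) {P : Profile n m → Prop} (base : P Q)
    (step : ∀ R i x y, R i x ⋖ R i y → Q i y < Q i x → P (swapTop R i x y) → P R) :
    ∀ R, P R := by
  intro R
  induction h : #(discordance Q R) using Nat.strong_induction_on generalizing R with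
  | _ d ih =>
  obtain rfl | hRQ := eq_or_ne R Q
  · exact base
  · obtain ⟨i, x, y, hxy, hQ⟩ := exists_discordant_covBy hRQ
    exact step R i x y hxy hQ
      (ih _ (h ▸ card_lt_card (discordance_swapTop_ssubset hxy hQ)) _ rfl)

/-! ### Localized and non-perverse schemes -/

/-- The probability that `x` loses when voter `i` swaps it with the alternative `y` ranked directly
below it. -/
def swapLoss (F : Profile n m → Fin m → ℝ) (R : Profile n m) (i : Fin n) (x y : Fin m) : ℝ :=
  F R x - F (swapTop R i x y) x

/-- Gibbard's localizedness: swapping two alternatives that are adjacent in a voter's ranking only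
transfers probability between these two. -/
def Localized (F : Profile n m → Fin m → ℝ) : Prop :=
  ∀ ⦃R i x y⦄, R i x ⋖ R i y →
    F (swapTop R i x y) =
      F R + Pi.single y (swapLoss F R i x y) - Pi.single x (swapLoss F R i x y)

/-- Gibbard's non-perversity: an alternative never gains when a voter moves it down one rank. -/
def NonPerverse (F : Profile n m → Fin m → ℝ) : Prop :=
  ∀ ⦃R i x y⦄, R i x ⋖ R i y → 0 ≤ swapLoss F R i x y

lemma Strategyproof.sum_filter_lt_le (hsp : Strategyproof F) (hF : IsSDS F)
    (h : ∀ j, j ≠ i → R j = Q j) (k : ℕ) :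
    ∑ z with (R i z : ℕ) < k, F Q z ≤ ∑ z with (R i z : ℕ) < k, F R z := by
  rcases lt_or_ge k m with hk | hk
  · simpa [Fin.lt_def] using hsp R Q i h ((R i).symm ⟨k, hk⟩)
  · rw [filter_true_of_mem fun z _ => (R i z).isLt.trans_le hk, hF.2, hF.2]

lemma sum_filter_lt_add_one (e : Equiv.Perm (Fin m)) (f : Fin m → ℝ) (x : Fin m) :
    ∑ z with (e z : ℕ) < e x + 1, f z = f x + ∑ z with (e z : ℕ) < e x, f z := by
  have hinsert : univ.filter (fun z => (e z : ℕ) < e x + 1) =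
      insert x (univ.filter fun z => (e z : ℕ) < e x) := by
    ext z
    have hinj : (e z : ℕ) = e x ↔ z = x := by rw [← Fin.ext_iff, e.injective.eq_iff]
    simp only [mem_filter, mem_univ, true_and, mem_insert, ← hinj]
    omega
  rw [hinsert, sum_insert (by simp)]

lemma filter_swapTop_lt (hxy : R i x ⋖ R i y) {k : ℕ} (hk : k ≠ R i y) :
    univ.filter (fun z => (swapTop R i x y i z : ℕ) < k) =
      univ.filter fun z => (R i z : ℕ) < k := by
  rw [covBy_iff_val_add_one] at hxy
  ext z
  simp only [mem_filter, mem_univ, true_and, swapTop_self, Equiv.Perm.mul_apply,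
    Equiv.swap_apply_def]
  grind

lemma Strategyproof.sum_filter_lt_swapTop (hsp : Strategyproof F) (hF : IsSDS F)
    (hxy : R i x ⋖ R i y) {k : ℕ} (hk : k ≠ R i y) :
    ∑ z with (R i z : ℕ) < k, F (swapTop R i x y) z = ∑ z with (R i z : ℕ) < k, F R z := by
  apply le_antisymm (hsp.sum_filter_lt_le hF (fun j hj => (swapTop_of_ne hj).symm) k)
  have hback := hsp.sum_filter_lt_le hF (R := swapTop R i x y) (Q := R)
    (fun j hj => swapTop_of_ne hj) k
  rwa [filter_swapTop_lt hxy hk] at hback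

theorem Strategyproof.nonPerverse (hsp : Strategyproof F) (hF : IsSDS F) : NonPerverse F := by
  intro R i x y hxy
  have hbelow := hsp.sum_filter_lt_swapTop hF hxy (k := R i x) (Fin.val_ne_of_ne hxy.lt.ne)
  have hupto := hsp.sum_filter_lt_le hF (R := R) (Q := swapTop R i x y)
    (fun j hj => (swapTop_of_ne hj).symm) (R i x + 1)
  rw [sum_filter_lt_add_one, sum_filter_lt_add_one] at hupto
  rw [swapLoss]
  linarith

theorem Strategyproof.localized (hsp : Strategyproof F) (hF : IsSDS F) : Localized F := by
  intro R i x y hxy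
  have hval := covBy_iff_val_add_one.1 hxy
  have hother {z : Fin m} (hx : z ≠ x) (hy : z ≠ y) : F (swapTop R i x y) z = F R z := by
    have hne {w : Fin m} (hw : z ≠ w) : (R i z : ℕ) ≠ R i w :=
      Fin.val_ne_of_ne ((R i).injective.ne hw)
    have hbelow := hsp.sum_filter_lt_swapTop hF hxy (hne hy)
    have hupto := hsp.sum_filter_lt_swapTop hF hxy (k := R i z + 1) (by have := hne hx; omega)
    rw [sum_filter_lt_add_one, sum_filter_lt_add_one] at hupto
    linarith
  have hpair : F (swapTop R i x y) x + F (swapTop R i x y) y = F R x + F R y := by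
    have hbelow := hsp.sum_filter_lt_swapTop hF hxy (k := R i x) (by omega)
    have hupto := hsp.sum_filter_lt_swapTop hF hxy (k := R i y + 1) (by omega)
    rw [sum_filter_lt_add_one, sum_filter_lt_add_one, ← hval, sum_filter_lt_add_one,
      sum_filter_lt_add_one] at hupto
    linarith
  have hne := ne_of_covBy hxy
  ext z
  rcases eq_or_ne z x with rfl | hzx
  · simp [swapLoss, hne]
  rcases eq_or_ne z y with rfl | hzy
  · simp only [swapLoss, Pi.add_apply, Pi.sub_apply, Pi.single_eq_same, Pi.single_eq_of_ne hzx]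
    linarith
  · simp [hother hzx hzy, hzx, hzy]

theorem Localized.strategyproof (hloc : Localized F) (hnp : NonPerverse F) : Strategyproof F := by
  intro R Q i hRQ x
  set U : Finset (Fin m) := {y | R i y < R i x}
  refine profile_induction R (P := fun S => (∀ j, j ≠ i → R j = S j) →
    ∑ y ∈ U, F S y ≤ ∑ y ∈ U, F R y) (fun _ => le_rfl) (fun S k u v huv hR ih hS => ?_) Q hRQ
  obtain rfl : k = i := by
    by_contra hk
    rw [hS k hk] at hR
    exact huv.lt.not_gt hR
  refine le_trans ?_ (ih fun j hj => (hS j hj).trans (swapTop_of_ne hj).symm)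
  have hmem : u ∈ U → v ∈ U := by simpa [U] using hR.trans
  rw [hloc huv]
  simp only [Pi.add_apply, Pi.sub_apply, sum_sub_distrib, sum_add_distrib, sum_pi_single']
  have hloss := hnp huv
  split_ifs with hv hu hu
  · simp
  · simpa using hloss
  · exact absurd (hmem hu) hv
  · simp

lemma Localized.eq_of_swapLoss_eq_zero (hloc : Localized F)
    (h : ∀ R i x y, R i x ⋖ R i y → swapLoss F R i x y = 0) (R Q : Profile n m) : F R = F Q := by
  refine profile_induction Q (P := fun R => F R = F Q) rfl (fun S i x y hxy _ ih => ?_) R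
  rw [← ih, hloc hxy, h S i x y hxy]
  simp

lemma Localized.apply_le_of_forall_le (hloc : Localized F) (hnp : NonPerverse F)
    (hlast : ∀ j y, Q j y ≤ Q j x) (R : Profile n m) : F Q x ≤ F R x := by
  refine profile_induction Q (P := fun R => F Q x ≤ F R x) le_rfl
    (fun S k u v huv hQ ih => ih.trans ?_) R
  have hv : x ≠ v := by
    rintro rfl
    exact (hlast k u).not_gt hQ
  simp only [hloc huv, Pi.sub_apply, Pi.add_apply, Pi.single_eq_of_ne hv, add_zero,
    sub_le_self_iff, Pi.single_apply]
  split_ifs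
  exacts [hnp huv, le_rfl]

lemma Localized.swapLoss_swapTop (hloc : Localized F) (hij : i ≠ j) (hxy : R i x ⋖ R i y)
    (hzw : R j z ⋖ R j w) (hne : s(x, y) ≠ s(z, w)) :
    swapLoss F (swapTop R j z w) i x y = swapLoss F R i x y := by
  have hxy' : swapTop R j z w i x ⋖ swapTop R j z w i y := by rwa [swapTop_of_ne hij]
  have hzw' : swapTop R i x y j z ⋖ swapTop R i x y j w := by rwa [swapTop_of_ne hij.symm]
  have hcomm := hloc hxy'
  rw [← swapTop_comm hij, hloc hzw', hloc hxy, hloc hzw] at hcomm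
  have := ne_of_covBy hxy
  have := ne_of_covBy hzw
  have hx := congrFun hcomm x
  have hy := congrFun hcomm y
  simp only [Pi.add_apply, Pi.sub_apply, Pi.single_apply] at hx hy
  simp only [ne_eq, Sym2.eq_iff, not_or, not_and] at hne
  grind

theorem Localized.swapLoss_congr (hloc : Localized F) (hxy : R i x ⋖ R i y) (hi : R i = Q i)
    (h : ∀ j, R j x < R j y ↔ Q j x < Q j y) : swapLoss F R i x y = swapLoss F Q i x y := by
  refine profile_induction Q (P := fun S => S i = Q i → (∀ j, S j x < S j y ↔ Q j x < Q j y) →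
    swapLoss F S i x y = swapLoss F Q i x y) (fun _ _ => rfl)
    (fun S k u v huv hQ ih hS_i hS => ?_) R hi h
  have hik : i ≠ k := by
    rintro rfl
    rw [← hS_i] at hQ
    exact huv.lt.not_gt hQ
  have hne : s(x, y) ≠ s(u, v) := by
    intro hpair
    rcases Sym2.eq_iff.1 hpair with ⟨rfl, rfl⟩ | ⟨rfl, rfl⟩
    · exact hQ.not_gt ((hS k).1 huv.lt)
    · exact huv.lt.not_gt ((hS k).2 hQ)
  rw [← hloc.swapLoss_swapTop hik (by rwa [hS_i, ← hi]) huv hne]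
  refine ih (by rwa [swapTop_of_ne hik]) fun j => ?_
  rw [swapTop_lt_swapTop_iff huv fun _ => hne, hS]

/-- Both sides are the probability lost by `x` when voter `i` moves it from above `y` and `z` to
below them, the two alternatives being interchanged after or before the move. -/
theorem Localized.swapLoss_add_swapLoss (hloc : Localized F) (hxy : R i x ⋖ R i y)
    (hyz : R i y ⋖ R i z) :
    swapLoss F R i x y + swapLoss F (swapTop R i x y) i x z =
      swapLoss F (swapTop R i y z) i x z +
        swapLoss F (swapTop (swapTop R i y z) i x z) i x y := by
  have hxy_ne := ne_of_covBy hxy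
  have hyz_ne := ne_of_covBy hyz
  have hxz_ne : x ≠ z := fun h => (hxy.lt.trans hyz.lt).ne (congrArg _ h)
  have hfirst : F (swapTop R i y z) x = F R x := by simp [hloc hyz, hxy_ne, hxz_ne]
  have hlast : swapTop (swapTop R i x y) i x z i y ⋖ swapTop (swapTop R i x y) i x z i z := by
    rwa [swapTop_apply_right, swapTop_apply_of_ne_of_ne hxy_ne.symm hyz_ne, swapTop_apply_left,
      swapTop_apply_right]
  have hthird : F (swapTop (swapTop (swapTop R i x y) i x z) i y z) x =
      F (swapTop (swapTop R i x y) i x z) x := by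
    simp [hloc hlast, hxy_ne, hxz_ne]
  rw [swapTop_braid hxy_ne hyz_ne] at hthird
  simp only [swapLoss, hfirst, hthird]
  ring

lemma swapLoss_sub_smul (F G : Profile n m → Fin m → ℝ) (c : ℝ) :
    swapLoss (F - c • G) R i x y = swapLoss F R i x y - c * swapLoss G R i x y := by
  simp only [swapLoss, Pi.sub_apply, Pi.smul_apply, smul_eq_mul]
  ring

lemma Localized.sub_smul {G : Profile n m → Fin m → ℝ} (hF : Localized F) (hG : Localized G)
    (c : ℝ) : Localized (F - c • G) := by
  intro R i x y hxy
  ext z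
  simp only [swapLoss_sub_smul, Pi.sub_apply, Pi.smul_apply, Pi.add_apply, hF hxy, hG hxy,
    smul_eq_mul, Pi.single_apply]
  split_ifs <;> ring

/-! ### Anonymous and neutral schemes -/

lemma suppSize_le (R : Profile n m) (x y : Fin m) : suppSize R x y ≤ n :=
  card_finset_fin_le _

lemma suppSize_pos (h : R i x < R i y) : 0 < suppSize R x y :=
  card_pos.2 ⟨i, by simpa using h⟩

lemma suppSize_swapTop (hxy : R i x ⋖ R i y) (hne : s(z, w) ≠ s(x, y)) :
    suppSize (swapTop R i x y) z w = suppSize R z w := by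
  simp only [suppSize, swapTop_lt_swapTop_iff hxy fun _ => hne]

lemma swapTop_relabel (τ : Equiv.Perm (Fin m)) :
    swapTop (relabel τ R) i (τ x) (τ y) = relabel τ (swapTop R i x y) := by
  ext j z
  rcases eq_or_ne j i with rfl | hj
  · simp [relabel, swapTop]
  · simp [relabel, swapTop, hj]

lemma Neutral.swapLoss_relabel (hneu : Neutral F) (τ : Equiv.Perm (Fin m)) :
    swapLoss F (relabel τ R) i (τ x) (τ y) = swapLoss F R i x y := by
  rw [swapLoss, swapTop_relabel, hneu, hneu, swapLoss]

lemma swapTop_comp (π : Equiv.Perm (Fin n)) :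
    swapTop (fun l => R (π l)) i x y = fun l => swapTop R (π i) x y (π l) := by
  ext l : 1
  rcases eq_or_ne l i with rfl | hl
  · simp [swapTop]
  · simp [swapTop, hl]

lemma Anonymous.swapLoss_comp (han : Anonymous F) (π : Equiv.Perm (Fin n)) :
    swapLoss F (fun l => R (π l)) i x y = swapLoss F R (π i) x y := by
  rw [swapLoss, swapTop_comp, han, han, swapLoss]

lemma exists_perm_apply_eq_of_card_eq {α : Type*} [Fintype α] {p q : α → Prop}
    [DecidablePred p] [DecidablePred q] {a b : α} (ha : p a) (hb : q b)
    (hcard : #{c | p c} = #{c | q c}) :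
    ∃ π : Equiv.Perm α, π a = b ∧ ∀ c, q (π c) ↔ p c := by
  classical
  rw [← Fintype.card_subtype, ← Fintype.card_subtype] at hcard
  let e := Fintype.equivOfCardEq hcard
  let e' := e.trans (Equiv.swap (e ⟨a, ha⟩) ⟨b, hb⟩)
  refine ⟨e'.extendSubtype, ?_, fun c => ?_⟩
  · simp [e'.extendSubtype_apply_of_mem a ha, e']
  · by_cases hc : p c
    · exact iff_of_true (e'.extendSubtype_mem c hc) hc
    · exact iff_of_false (e'.extendSubtype_not_mem c hc) hc

lemma Localized.swapLoss_eq_of_apply_eq (hloc : Localized F) (han : Anonymous F)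
    (hxy : R i x ⋖ R i y) (hij : R i = Q j) (hsupp : suppSize R x y = suppSize Q x y) :
    swapLoss F R i x y = swapLoss F Q j x y := by
  obtain ⟨π, rfl, hπ⟩ := exists_perm_apply_eq_of_card_eq (p := fun l => R l x < R l y)
    (q := fun l => Q l x < Q l y) hxy.lt (hij ▸ hxy.lt) hsupp
  rw [← han.swapLoss_comp]
  exact hloc.swapLoss_congr hxy hij fun l => (hπ l).symm

theorem Localized.swapLoss_eq_of_suppSize_eq (hloc : Localized F) (han : Anonymous F)
    (hneu : Neutral F) (hxy : R i x ⋖ R i y) (hxz : R i x = Q j z) (hyw : R i y = Q j w)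
    (hsupp : suppSize R x y = suppSize Q z w) : swapLoss F R i x y = swapLoss F Q j z w := by
  let τ : Equiv.Perm (Fin m) := (Q j).trans (R i).symm
  have hz : τ z = x := by simp [τ, ← hxz]
  have hw : τ w = y := by simp [τ, ← hyw]
  rw [← hneu.swapLoss_relabel τ (R := Q), hz, hw]
  refine hloc.swapLoss_eq_of_apply_eq han hxy ?_ ?_
  · ext u
    simp [relabel, τ]
  · rw [hsupp, ← hz, ← hw]
    simp [suppSize, relabel]

variable {a b c d : Fin m} {k l : ℕ}

lemma suppSize_eq_of_forall_lt_iff (hk : k ≤ n) (h : ∀ j : Fin n, R j x < R j y ↔ (j : ℕ) < k) :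
    suppSize R x y = k := by
  simp only [suppSize, h, Fin.card_filter_val_lt, min_eq_right hk]

/-- The profile in which the first `k` voters rank the alternatives in their natural order, whereas
all others interchange `a` and `b`. -/
def twoTypeProfile (n : ℕ) (a b : Fin m) (k : ℕ) : Profile n m :=
  fun j => if (j : ℕ) < k then 1 else Equiv.swap a b

/-- The probability gained by `a` when the number of its supporters against `b` rises from `k` to
`k + 1`, measured at the canonical two-type profiles. For anonymous and neutral localized schemes,
it is the loss of every swap of the ranks `a` and `b` at which the upper alternative has `k + 1`
supporters. -/
def supportIncrement (F : Profile n m → Fin m → ℝ) (a b : Fin m) (k : ℕ) : ℝ :=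
  F (twoTypeProfile n a b (k + 1)) a - F (twoTypeProfile n a b k) a

lemma suppSize_twoTypeProfile (hab : a < b) (hk : k ≤ n) :
    suppSize (twoTypeProfile n a b k) a b = k := by
  refine suppSize_eq_of_forall_lt_iff hk fun j => ?_
  rw [twoTypeProfile]
  split_ifs with hj <;> simp [hj, hab, hab.le]

lemma swapTop_twoTypeProfile (hk : k < n) :
    swapTop (twoTypeProfile n a b (k + 1)) ⟨k, hk⟩ a b = twoTypeProfile n a b k := by
  ext j : 1
  rcases eq_or_ne j ⟨k, hk⟩ with rfl | hj
  · simp [swapTop_self, twoTypeProfile]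
  · have : (j : ℕ) < k + 1 ↔ (j : ℕ) < k := by
      have := Fin.val_ne_of_ne hj
      simp only at this
      omega
    simp [swapTop_of_ne hj, twoTypeProfile, this]

lemma supportIncrement_eq_swapLoss (F : Profile n m → Fin m → ℝ) (hk : k < n) :
    supportIncrement F a b k = swapLoss F (twoTypeProfile n a b (k + 1)) ⟨k, hk⟩ a b := by
  rw [supportIncrement, swapLoss, swapTop_twoTypeProfile]

lemma NonPerverse.supportIncrement_nonneg (hnp : NonPerverse F) (hab : a ⋖ b) (hk : k < n) :
    0 ≤ supportIncrement F a b k := by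
  rw [supportIncrement_eq_swapLoss F hk]
  exact hnp (by simpa [twoTypeProfile] using hab)

lemma Localized.swapLoss_eq_supportIncrement (hloc : Localized F) (han : Anonymous F)
    (hneu : Neutral F) (hxy : R i x ⋖ R i y) :
    swapLoss F R i x y = supportIncrement F (R i x) (R i y) (suppSize R x y - 1) := by
  have hpos := suppSize_pos hxy.lt
  have hle := suppSize_le R x y
  rw [supportIncrement_eq_swapLoss F (by omega)]
  refine hloc.swapLoss_eq_of_suppSize_eq han hneu hxy ?_ ?_ ?_
  · simp [twoTypeProfile]
  · simp [twoTypeProfile]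
  · rw [suppSize_twoTypeProfile hxy.lt (by omega)]
    omega

lemma Neutral.sum_supportIncrement (hneu : Neutral F) (a b : Fin m) :
    ∑ k ∈ range n, supportIncrement F a b k = F 1 a - F 1 b := by
  have hall : twoTypeProfile n a b n = 1 := by
    ext j : 1
    simp [twoTypeProfile]
  have hnone : twoTypeProfile n a b 0 = relabel (Equiv.swap a b) 1 := by
    ext j : 1
    simp [twoTypeProfile, relabel, Equiv.Perm.one_def]
  have hb := hneu (Equiv.swap a b) 1 b
  rw [Equiv.swap_apply_right] at hb
  simp only [supportIncrement]
  rw [sum_range_sub (fun k => F (twoTypeProfile n a b k) a), hall, hnone, hb]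

lemma Localized.supportIncrement_add_suppSize (hloc : Localized F) (han : Anonymous F)
    (hneu : Neutral F) (hxy : R i x ⋖ R i y) (hyz : R i y ⋖ R i z) :
    supportIncrement F (R i x) (R i y) (suppSize R x y - 1) +
        supportIncrement F (R i y) (R i z) (suppSize R x z - 1) =
      supportIncrement F (R i x) (R i y) (suppSize R x z - 1) +
        supportIncrement F (R i y) (R i z) (suppSize R x y - 1) := by
  have hxy_ne := ne_of_covBy hxy
  have hyz_ne := ne_of_covBy hyz
  have hxz_ne : x ≠ z := fun h => (hxy.lt.trans hyz.lt).ne (congrArg _ h)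
  have hrank_z : swapTop R i x y i z = R i z := swapTop_apply_of_ne_of_ne hxz_ne.symm hyz_ne.symm
  have hrank_x : swapTop R i y z i x = R i x := swapTop_apply_of_ne_of_ne hxy_ne hxz_ne
  have hrank_y' : swapTop (swapTop R i y z) i x z i y = R i z := by
    rw [swapTop_apply_of_ne_of_ne hxy_ne.symm hyz_ne, swapTop_apply_left]
  have hrank_x' : swapTop (swapTop R i y z) i x z i x = R i y := by
    rw [swapTop_apply_left, swapTop_apply_right]
  have hcov_left : swapTop R i x y i x ⋖ swapTop R i x y i z := by rwa [swapTop_apply_left, hrank_z]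
  have hcov_right : swapTop R i y z i x ⋖ swapTop R i y z i z := by
    rwa [swapTop_apply_right, hrank_x]
  have hcov_right' : swapTop (swapTop R i y z) i x z i x ⋖ swapTop (swapTop R i y z) i x z i y := by
    rwa [hrank_x', hrank_y']
  have hpairs : s(x, z) ≠ s(x, y) ∧ s(x, z) ≠ s(y, z) ∧ s(x, y) ≠ s(x, z) ∧ s(x, y) ≠ s(y, z) := by
    simp [hxy_ne, hxz_ne, hyz_ne, hyz_ne.symm, hxz_ne.symm]
  have h := hloc.swapLoss_add_swapLoss hxy hyz
  rwa [hloc.swapLoss_eq_supportIncrement han hneu hxy,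
    hloc.swapLoss_eq_supportIncrement han hneu hcov_left,
    hloc.swapLoss_eq_supportIncrement han hneu hcov_right,
    hloc.swapLoss_eq_supportIncrement han hneu hcov_right', suppSize_swapTop hxy hpairs.1,
    suppSize_swapTop hyz hpairs.2.1, suppSize_swapTop hcov_right hpairs.2.2.1,
    suppSize_swapTop hyz hpairs.2.2.2, swapTop_apply_left, swapTop_apply_right, hrank_z,
    hrank_x, hrank_x', hrank_y'] at h

lemma exists_profile_suppSize_eq (hab : a < b) (hbc : b < c) (hkl : k ≤ l) (hl : l < n) :
    ∃ (R : Profile n m) (i : Fin n),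
      R i = 1 ∧ suppSize R a b = k + 1 ∧ suppSize R a c = l + 1 := by
  have hac := hab.trans hbc
  refine ⟨fun j => if (j : ℕ) < k + 1 then 1 else if (j : ℕ) < l + 1 then Equiv.swap a b
    else Equiv.swap a c, ⟨0, by omega⟩, by simp, ?_, ?_⟩
  · refine suppSize_eq_of_forall_lt_iff (by omega) fun j => ?_
    split_ifs with hk hl
    · simp [hk, hab]
    · simp [hk, hab.le]
    · simp [hk, hbc.le, Equiv.swap_apply_of_ne_of_ne hab.ne' hbc.ne]
  · refine suppSize_eq_of_forall_lt_iff (by omega) fun j => ?_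
    split_ifs with hk hl
    · simp [hk.trans_le (Nat.succ_le_succ hkl), hac]
    · simp [hl, hbc, Equiv.swap_apply_of_ne_of_ne hac.ne' hbc.ne']
    · simp [hl, hac.le]

lemma Localized.supportIncrement_sub_eq_of_covBy (hloc : Localized F) (han : Anonymous F)
    (hneu : Neutral F) (hab : a ⋖ b) (hbc : b ⋖ c) (hk : k < n) (hl : l < n) :
    supportIncrement F a b k - supportIncrement F a b l =
      supportIncrement F b c k - supportIncrement F b c l := by
  wlog hkl : k ≤ l generalizing k l
  · linarith [this hl hk (le_of_not_ge hkl)]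
  obtain ⟨R, i, hi, hsupp_ab, hsupp_ac⟩ := exists_profile_suppSize_eq hab.lt hbc.lt hkl hl
  have h := hloc.supportIncrement_add_suppSize han hneu (R := R) (i := i) (x := a) (y := b)
    (z := c) (by rwa [hi]) (by rwa [hi])
  simp only [hi, hsupp_ab, hsupp_ac, Equiv.Perm.one_apply, add_tsub_cancel_right] at h
  linarith

theorem Localized.supportIncrement_sub_eq (hloc : Localized F) (han : Anonymous F)
    (hneu : Neutral F) (hab : a ⋖ b) (hcd : c ⋖ d) (hk : k < n) (hl : l < n) :
    supportIncrement F a b k - supportIncrement F a b l =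
      supportIncrement F c d k - supportIncrement F c d l := by
  wlog hac : a ≤ c generalizing a b c d
  · exact (this hcd hab (le_of_not_ge hac)).symm
  rw [le_iff_reflTransGen_covBy] at hac
  induction hac generalizing d with
  | refl => rw [hab.unique_right hcd]
  | tail _ hcovBy ih =>
    exact (ih hcovBy).trans
      (hloc.supportIncrement_sub_eq_of_covBy han hneu hcovBy hcd hk hl)

/-! ### Random dictatorships -/

lemma dictProb_eq_ite [NeZero m] (R : Profile n m) (i : Fin n) (x : Fin m) :
    dictProb R i x = if R i x = 0 then 1 else 0 := by
  have hfirst : (∀ y, R i x ≤ R i y) ↔ R i x = 0 := by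
    refine ⟨fun h => ?_, fun h y => h ▸ Fin.zero_le _⟩
    simpa using h ((R i).symm 0)
  simp only [dictProb, hfirst]

lemma sum_dictProb [NeZero m] (R : Profile n m) (i : Fin n) : ∑ x, dictProb R i x = 1 := by
  simp [dictProb_eq_ite, ← Equiv.eq_symm_apply]

lemma IsRandDict.sum_eq_one [NeZero m] {d : Profile n m → Fin m → ℝ} (hd : IsRandDict d)
    (R : Profile n m) : ∑ x, d R x = 1 := by
  obtain ⟨δ, -, hδ, hd⟩ := hd
  simp only [hd]
  rw [sum_comm]
  simp [← mul_sum, sum_dictProb, hδ]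

lemma isRandDict_uniformRD [NeZero n] : IsRandDict (uniformRD n m) :=
  ⟨fun _ => 1 / n, fun _ => by positivity, by simp, fun R x => by rw [uniformRD, mul_sum]⟩

lemma dictProb_of_eq_mul {e : Equiv.Perm (Fin m)} (h : R i = Q j * e) :
    dictProb R i x = dictProb Q j (e x) := by
  simp only [dictProb, h, Equiv.Perm.mul_apply, e.forall_congr_right (q := (Q j (e x) ≤ Q j ·))]

lemma neutral_uniformRD : Neutral (uniformRD n m) := by
  intro τ R x
  have hdict (i : Fin n) : dictProb (relabel τ R) i (τ x) = dictProb R i x := by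
    have hmul : relabel τ R i = R i * τ⁻¹ := rfl
    simp [dictProb_of_eq_mul hmul]
  simp only [uniformRD, hdict]

lemma dictProb_eq_zero_of_lt (h : R i x < R i y) : dictProb R i y = 0 :=
  if_neg fun hall => (hall x).not_gt h

lemma dictProb_swapTop_self :
    dictProb (swapTop R i x y) i z = dictProb R i (Equiv.swap x y z) :=
  dictProb_of_eq_mul swapTop_self

lemma uniformRD_swapTop_sub :
    uniformRD n m (swapTop R i x y) z - uniformRD n m R z =
      1 / n * (dictProb R i (Equiv.swap x y z) - dictProb R i z) := by
  rw [uniformRD, uniformRD, ← mul_sub, ← sum_sub_distrib, Fintype.sum_eq_single i fun j hj => ?_,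
    dictProb_swapTop_self]
  rw [dictProb, dictProb, swapTop_of_ne hj, sub_self]

lemma swapLoss_uniformRD (hxy : R i x ⋖ R i y) :
    swapLoss (uniformRD n m) R i x y = 1 / n * dictProb R i x := by
  have hsub := uniformRD_swapTop_sub (R := R) (i := i) (x := x) (y := y) (z := x)
  rw [Equiv.swap_apply_left, dictProb_eq_zero_of_lt hxy.lt] at hsub
  rw [swapLoss]
  linarith

lemma localized_uniformRD : Localized (uniformRD n m) := by
  intro R i x y hxy
  have hne := ne_of_covBy hxy
  ext z
  rw [Pi.sub_apply, Pi.add_apply, swapLoss_uniformRD hxy, add_sub_assoc, ← sub_eq_iff_eq_add',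
    uniformRD_swapTop_sub]
  rcases eq_or_ne z x with rfl | hzx
  · simp [dictProb_eq_zero_of_lt hxy.lt, hne]
  rcases eq_or_ne z y with rfl | hzy
  · simp [dictProb_eq_zero_of_lt hxy.lt, hzx]
  · simp [Equiv.swap_apply_of_ne_of_ne hzx hzy, hzx, hzy]

lemma decomposesAt_of_sub_smul [NeZero m] (hF : IsSDS F) (hsp : Strategyproof F)
    {d : Profile n m → Fin m → ℝ} (hd : IsRandDict d) {γ : ℝ} (hle : ∀ R x, γ * d R x ≤ F R x)
    (hrest : Strategyproof (F - γ • d)) :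
    γ ≤ 1 ∧ DecomposesAt F γ := by
  have hsum (R : Profile n m) : ∑ x, (F - γ • d) R x = 1 - γ := by
    simp [sum_sub_distrib, ← mul_sum, hF.2, hd.sum_eq_one]
  have hnonneg (R : Profile n m) (x : Fin m) : 0 ≤ (F - γ • d) R x := by simpa using hle R x
  have hγ : γ ≤ 1 := by
    rw [← sub_nonneg, ← hsum 1]
    exact sum_nonneg fun x _ => hnonneg 1 x
  refine ⟨hγ, ?_⟩
  rcases hγ.eq_or_lt with rfl | hγ
  · refine ⟨d, F, hd, hF, hsp, fun R x => ?_⟩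
    have hzero := (sum_eq_zero_iff_of_nonneg fun x _ => hnonneg R x).1 ((hsum R).trans (sub_self 1))
    simpa [sub_eq_zero] using hzero x (mem_univ x)
  · have hpos : 0 < 1 - γ := sub_pos.2 hγ
    refine ⟨d, (1 - γ)⁻¹ • (F - γ • d), hd, ⟨fun R x => ?_, fun R => ?_⟩, fun R Q i h x => ?_,
      fun R x => ?_⟩
    · exact mul_nonneg (inv_nonneg.2 hpos.le) (hnonneg R x)
    · simp only [Pi.smul_apply, smul_eq_mul, ← mul_sum, hsum, inv_mul_cancel₀ hpos.ne']
    · simp only [Pi.smul_apply (1 - γ)⁻¹, smul_eq_mul, ← mul_sum]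
      exact mul_le_mul_of_nonneg_left (hrest R Q i h x) (inv_nonneg.2 hpos.le)
    · simp [mul_inv_cancel_left₀ hpos.ne']

lemma exists_profile_forall_le (x : Fin m) : ∃ Q : Profile n m, ∀ j y, Q j y ≤ Q j x := by
  have : NeZero m := ⟨x.pos.ne'⟩
  exact ⟨fun _ => Equiv.swap x ⊤, fun j y => by simp⟩

lemma uniformRD_eq_zero_of_forall_le [Nontrivial (Fin m)] (hlast : ∀ j y, Q j y ≤ Q j x) :
    uniformRD n m Q x = 0 := by
  obtain ⟨y, hyx⟩ := exists_ne x
  have hdict (j : Fin n) : dictProb Q j x = 0 :=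
    dictProb_eq_zero_of_lt ((hlast j y).lt_of_ne ((Q j).injective.ne hyx))
  simp [uniformRD, hdict]

lemma mul_swapLoss_uniformRD [NeZero n] (hxy : R i x ⋖ R i y) (δ : ℝ) :
    n * δ * swapLoss (uniformRD n m) R i x y = δ * dictProb R i x := by
  have hn : (n : ℝ) ≠ 0 := Nat.cast_ne_zero.2 (NeZero.ne n)
  rw [swapLoss_uniformRD hxy]
  field_simp

lemma decomposesAt_of_le_swapLoss [NeZero n] [Nontrivial (Fin m)] (hF : IsSDS F)
    (hsp : Strategyproof F) {δ : ℝ}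
    (h : ∀ R i x y, R i x ⋖ R i y → δ * dictProb R i x ≤ swapLoss F R i x y) :
    n * δ ≤ 1 ∧ DecomposesAt F (n * δ) := by
  have : NeZero m := ⟨(Fin.pos_iff_nonempty.2 inferInstance).ne'⟩
  have hloc : Localized (F - (n * δ) • uniformRD n m) :=
    (hsp.localized hF).sub_smul localized_uniformRD _
  have hnp : NonPerverse (F - (n * δ) • uniformRD n m) := by
    intro R i x y hxy
    rw [swapLoss_sub_smul, mul_swapLoss_uniformRD hxy, sub_nonneg]
    exact h R i x y hxy
  refine decomposesAt_of_sub_smul hF hsp isRandDict_uniformRD (fun R x => ?_)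
    (hloc.strategyproof hnp)
  obtain ⟨Q, hlast⟩ := exists_profile_forall_le (n := n) x
  have hle := hloc.apply_le_of_forall_le hnp hlast R
  have hQ := hF.1 Q x
  simp only [Pi.sub_apply, Pi.smul_apply, uniformRD_eq_zero_of_forall_le hlast,
    smul_eq_mul] at hle
  linarith

theorem eq_mixture_of_swapLoss_eq [NeZero n] (hF : IsSDS F) (hloc : Localized F)
    (hneu : Neutral F) {δ : ℝ}
    (h : ∀ R i x y, R i x ⋖ R i y → swapLoss F R i x y = δ * dictProb R i x)
    (R : Profile n m) (x : Fin m) :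
    F R x = n * δ * uniformRD n m R x + (1 - n * δ) * uniformLottery n m R x := by
  have : NeZero m := ⟨x.pos.ne'⟩
  set G : Profile n m → Fin m → ℝ := F - (n * δ) • uniformRD n m with hG
  have hprofile (R Q : Profile n m) : G R = G Q := by
    refine (hloc.sub_smul localized_uniformRD _).eq_of_swapLoss_eq_zero (fun R i x y hxy => ?_) R Q
    rw [swapLoss_sub_smul, mul_swapLoss_uniformRD hxy, h R i x y hxy, sub_self]
  have hneuG : Neutral G := fun τ R z => by
    simp only [hG, Pi.sub_apply, Pi.smul_apply, hneu τ R z, neutral_uniformRD τ R z]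
  have hconst (z : Fin m) : G R z = G R x := by
    rw [← hneuG (Equiv.swap z x) R z, Equiv.swap_apply_left, hprofile (relabel _ R) R]
  have hsum : ∑ z, G R z = 1 - n * δ := by
    simp [hG, sum_sub_distrib, ← mul_sum, hF.2, isRandDict_uniformRD.sum_eq_one]
  simp only [hconst, sum_const, card_univ, Fintype.card_fin, nsmul_eq_mul] at hsum
  have hlottery : (1 - n * δ) * uniformLottery n m R x = G R x := by
    rw [← hsum, uniformLottery, mul_one_div,
      mul_div_cancel_left₀ _ (Nat.cast_ne_zero.2 (NeZero.ne m))]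
  rw [hlottery, hG]
  simp

/-! ### The smallest support increment -/

variable {δ : ℝ}

lemma Neutral.mul_le_apply_sub (hneu : Neutral F) (h : ∀ k < n, δ ≤ supportIncrement F a b k) :
    n * δ ≤ F 1 a - F 1 b := by
  rw [← hneu.sum_supportIncrement]
  simpa using card_nsmul_le_sum (range n) _ δ fun k hk => h k (mem_range.1 hk)

lemma Neutral.supportIncrement_eq_of_le (hneu : Neutral F)
    (h : ∀ k < n, δ ≤ supportIncrement F a b k) (hab : F 1 a - F 1 b = n * δ) (hk : k < n) :
    supportIncrement F a b k = δ := by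
  have hsum : ∑ _k ∈ range n, δ = ∑ k ∈ range n, supportIncrement F a b k := by
    simp [hneu.sum_supportIncrement, hab]
  rw [sum_eq_sum_iff_of_le fun k hk => h k (mem_range.1 hk)] at hsum
  exact (hsum k (mem_range.2 hk)).symm

lemma Localized.apply_sub_sub_eq (hloc : Localized F) (han : Anonymous F) (hneu : Neutral F)
    (hab : a ⋖ b) (hcd : c ⋖ d) (hl : l < n) :
    F 1 a - F 1 b - n * supportIncrement F a b l =
      F 1 c - F 1 d - n * supportIncrement F c d l := by
  have hsum (a b : Fin m) : F 1 a - F 1 b - n * supportIncrement F a b l =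
      ∑ k ∈ range n, (supportIncrement F a b k - supportIncrement F a b l) := by
    simp [hneu.sum_supportIncrement]
  rw [hsum, hsum]
  exact sum_congr rfl fun k hk =>
    hloc.supportIncrement_sub_eq han hneu hab hcd (mem_range.1 hk) hl

lemma Localized.apply_sub_sub_le (hloc : Localized F) (hnp : NonPerverse F) (han : Anonymous F)
    (hneu : Neutral F) (hab : a ⋖ b) (hcd : c ⋖ d) (hl : l < n) :
    F 1 a - F 1 b - n * supportIncrement F a b l ≤ F 1 c - F 1 d := by
  rw [hloc.apply_sub_sub_eq han hneu hab hcd hl, sub_le_self_iff]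
  exact mul_nonneg n.cast_nonneg (hnp.supportIncrement_nonneg hcd hl)

lemma zero_covBy_one : (0 : Fin (m + 2)) ⋖ 1 :=
  covBy_iff_val_add_one.2 rfl

lemma Localized.exists_swapLoss_eq_supportIncrement (hloc : Localized F) (han : Anonymous F)
    (hneu : Neutral F) (hxy : R i x ⋖ R i y) :
    ∃ k < n, swapLoss F R i x y = supportIncrement F (R i x) (R i y) k := by
  have hpos := suppSize_pos hxy.lt
  have hle := suppSize_le R x y
  exact ⟨_, by omega, hloc.swapLoss_eq_supportIncrement han hneu hxy⟩

section

variable {F : Profile n (m + 2) → Fin (m + 2) → ℝ} {R : Profile n (m + 2)} {x y : Fin (m + 2)}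

lemma Localized.mul_dictProb_le_swapLoss (hloc : Localized F) (hnp : NonPerverse F)
    (han : Anonymous F) (hneu : Neutral F) (h : ∀ k < n, δ ≤ supportIncrement F 0 1 k)
    (hxy : R i x ⋖ R i y) : δ * dictProb R i x ≤ swapLoss F R i x y := by
  obtain ⟨k, hk, hloss⟩ := hloc.exists_swapLoss_eq_supportIncrement han hneu hxy
  rw [dictProb_eq_ite, hloss]
  split_ifs with hx
  · rw [hx] at hxy ⊢
    rw [mul_one, ← zero_covBy_one.unique_right hxy]
    exact h k hk
  · rw [mul_zero]
    exact hnp.supportIncrement_nonneg hxy hk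

lemma Localized.swapLoss_eq_mul_dictProb (hloc : Localized F) (hnp : NonPerverse F)
    (han : Anonymous F) (hneu : Neutral F) (h : ∀ k < n, δ ≤ supportIncrement F 0 1 k)
    (htop : F 1 0 - F 1 1 = n * δ) (hrest : ∀ a ≠ 0, F 1 a = F 1 1) (hxy : R i x ⋖ R i y) :
    swapLoss F R i x y = δ * dictProb R i x := by
  obtain ⟨k, hk, hloss⟩ := hloc.exists_swapLoss_eq_supportIncrement han hneu hxy
  rw [dictProb_eq_ite, hloss]
  split_ifs with hx
  · rw [hx] at hxy ⊢
    rw [mul_one, ← zero_covBy_one.unique_right hxy]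
    exact hneu.supportIncrement_eq_of_le h htop hk
  · rw [mul_zero]
    refine hneu.supportIncrement_eq_of_le (fun l hl => hnp.supportIncrement_nonneg hxy hl) ?_ hk
    rw [hrest _ hx, hrest _ (Fin.ne_zero_of_lt hxy.lt), sub_self, mul_zero]

end

lemma eq_of_covBy_gap {h : Fin (m + 4) → ℝ} {γ : ℝ} (hsum : ∑ a, h a = 1) (hγ : γ ≤ h 0 - h 1)
    (hgap : ∀ a b, a ⋖ b → h 0 - h 1 - γ ≤ h a - h b) (hone : (m + 4) * h 1 ≤ 1 - γ) :
    h 0 - h 1 = γ ∧ ∀ a ≠ 0, h a = h 1 := by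
  have hanti : Antitone h :=
    (antitone_iff_forall_covBy h).2 fun a b hab => by linarith [hgap a b hab]
  have hnonneg (a : Fin (m + 3)) : 0 ≤ h 1 - h a.succ :=
    sub_nonneg.2 (hanti (Fin.succ_le_succ_iff.2 a.zero_le))
  have hdrops : ∑ a : Fin (m + 3), (h 1 - h a.succ) ≤ h 0 - h 1 - γ := by
    rw [Fin.sum_univ_succ] at hsum
    rw [sum_sub_distrib, sum_const, card_univ, Fintype.card_fin, nsmul_eq_mul]
    push_cast
    linarith
  have htwo : h 1 - h 3 ≤ h 0 - h 1 - γ :=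
    (single_le_sum (fun a _ => hnonneg a) (mem_univ (2 : Fin (m + 3)))).trans hdrops
  have h12 := hgap 1 2 (covBy_iff_val_add_one.2 rfl)
  have h23 := hgap 2 3 (covBy_iff_val_add_one.2 rfl)
  have heq : h 0 - h 1 = γ := by linarith
  refine ⟨heq, fun a ha => ?_⟩
  obtain ⟨a, rfl⟩ := Fin.exists_succ_eq.2 ha
  have hle := (single_le_sum (fun a _ => hnonneg a) (mem_univ a)).trans hdrops
  linarith [hnonneg a]

end Development

/-- For `m ≥ 4` and `ε ∈ [0,1]`, every strategyproof, anonymous,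
neutral, `(1-ε)/m`-ex post efficient and exactly `ε`-randomly dictatorial SDS
is a convex combination of the uniform random dictatorship and the uniform
lottery. -/
theorem mixture_of_uniformRD_and_uniformLottery (n m : ℕ) (hn : 1 ≤ n)
    (hm : 4 ≤ m) (ε : ℝ) (hε0 : 0 ≤ ε) (hε1 : ε ≤ 1)
    (F : Profile n m → Fin m → ℝ) (hF : IsSDS F) (hsp : Strategyproof F)
    (han : Anonymous F) (hneu : Neutral F)
    (heff : ExPostEff F ((1 - ε) / (m : ℝ))) (hrd : RandDictDegree F ε) :
    ∃ lam : ℝ, 0 ≤ lam ∧ lam ≤ 1 ∧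
      ∀ R x, F R x = lam * uniformRD n m R x + (1 - lam) * uniformLottery n m R x := by
  obtain ⟨m, rfl⟩ := Nat.exists_eq_add_of_le' hm
  have : NeZero n := ⟨by omega⟩
  have hloc := hsp.localized hF
  have hnp := hsp.nonPerverse hF
  obtain ⟨l, hl, hmin⟩ := exists_min_image (range n) (supportIncrement F 0 1) ⟨0, by simpa⟩
  simp only [mem_range] at hl hmin
  set δ := supportIncrement F 0 1 l
  have hδ_nonneg : 0 ≤ n * δ :=
    mul_nonneg n.cast_nonneg (hnp.supportIncrement_nonneg zero_covBy_one hl)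
  obtain ⟨hδ_le, hdec⟩ := decomposesAt_of_le_swapLoss hF hsp fun R i x y =>
    hloc.mul_dictProb_le_swapLoss hnp han hneu hmin
  have hδ_le_ε : n * δ ≤ ε := hrd.2.2.2 _ hδ_nonneg hδ_le hdec
  have hone : (m + 4) * F 1 1 ≤ 1 - n * δ := by
    have hdom := heff 1 1 ⟨0, fun _ => zero_covBy_one.lt⟩
    rw [le_div_iff₀' (by positivity)] at hdom
    push_cast at hdom
    linarith
  obtain ⟨htop, hrest⟩ := eq_of_covBy_gap (hF.2 1) (hneu.mul_le_apply_sub hmin)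
    (fun a b hab => hloc.apply_sub_sub_le hnp han hneu zero_covBy_one hab hl) hone
  exact ⟨n * δ, hδ_nonneg, hδ_le, eq_mixture_of_swapLoss_eq hF hloc hneu fun R i x y =>
    hloc.swapLoss_eq_mul_dictProb hnp han hneu hmin htop hrest⟩
end
end

section
/- If there exists a strategyproof SDS (for n voters and m alternatives) that is α-Condorcet-consistent for some α ∈ [0,1], then there also exists a strategyproof SDS (for the same n and m) that is anonymous, neutral, and α-Condorcet-consistent for the same α. -/
open Finset

noncomputable section

/-! Averaging `F` over all joint permutations of voters and alternatives makes it anonymous and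
neutral. Nothing else is lost: being an SDS, strategyproofness and `α`-Condorcet-consistency are
each stable under permuting voters and alternatives, and each defines a convex set of maps
`Profile n m → Fin m → ℝ`, so they pass to the average. -/

section Average

open scoped BigOperators

theorem expect_mem_of_convex {𝕜 E ι : Type*} [Field 𝕜] [LinearOrder 𝕜] [IsStrictOrderedRing 𝕜]
    [AddCommGroup E] [Module 𝕜 E] [Module ℚ≥0 E] {s : Set E} (hs : Convex 𝕜 s)
    {t : Finset ι} (ht : t.Nonempty) {z : ι → E} (hz : ∀ i ∈ t, z i ∈ s) :
    𝔼 i ∈ t, z i ∈ s := by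
  have card_ne_zero : (#t : 𝕜) ≠ 0 := Nat.cast_ne_zero.2 ht.card_ne_zero
  have weights_sum : ∑ _i ∈ t, (#t : 𝕜)⁻¹ = 1 := by
    rw [sum_const, nsmul_eq_mul, mul_inv_cancel₀ card_ne_zero]
  have expect_eq : 𝔼 i ∈ t, z i = ∑ i ∈ t, (#t : 𝕜)⁻¹ • z i := by
    rw [expect, ← smul_sum, ← NNRat.cast_smul_eq_nnqsmul 𝕜, NNRat.cast_inv, NNRat.cast_natCast]
  rw [expect_eq]
  exact hs.sum_mem (fun _ _ ↦ inv_nonneg.2 (Nat.cast_nonneg _)) weights_sum hz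

end Average

section Convexity

variable {n m : ℕ}

theorem convex_setOf_isSDS : Convex ℝ {F : Profile n m → Fin m → ℝ | IsSDS F} := by
  have setOf_eq_pi : {F : Profile n m → Fin m → ℝ | IsSDS F} =
      Set.univ.pi fun _ ↦ stdSimplex ℝ (Fin m) := by
    ext F
    simp only [IsSDS, stdSimplex, Set.mem_ofPred_eq, Set.mem_univ_pi, forall_and]
  rw [setOf_eq_pi]
  exact convex_pi fun _ _ ↦ convex_stdSimplex ℝ (Fin m)

theorem convex_setOf_strategyproof :
    Convex ℝ {F : Profile n m → Fin m → ℝ | Strategyproof F} := by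
  intro F hF G hG a b ha hb _ R R' i hR x
  simp only [Pi.add_apply, Pi.smul_apply, smul_eq_mul, sum_add_distrib, ← mul_sum]
  exact add_le_add (mul_le_mul_of_nonneg_left (hF R R' i hR x) ha)
    (mul_le_mul_of_nonneg_left (hG R R' i hR x) hb)

theorem convex_setOf_condorcetConsistent (α : ℝ) :
    Convex ℝ {F : Profile n m → Fin m → ℝ | CondorcetConsistent F α} :=
  fun _F hF _G hG _a _b ha hb hab R x hx ↦
    convex_Ici (𝕜 := ℝ) α (hF R x hx) (hG R x hx) ha hb hab

end Convexity

section Permutation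

variable {n m : ℕ} (g : Equiv.Perm (Fin n) × Equiv.Perm (Fin m))

/-- The left action of joint permutations of voters and alternatives on profiles: voter `g.1 i`
ranks alternative `g.2 x` in `permuteProfile g R` as voter `i` ranks `x` in `R`. -/
def permuteProfile (R : Profile n m) : Profile n m :=
  relabel g.2 fun i ↦ R (g.1.symm i)

theorem permuteProfile_apply (R : Profile n m) (i : Fin n) (x : Fin m) :
    permuteProfile g R (g.1 i) (g.2 x) = R i x := by
  simp [permuteProfile, relabel]

theorem suppSize_permuteProfile (R : Profile n m) (x y : Fin m) :
    suppSize (permuteProfile g R) (g.2 x) (g.2 y) = suppSize R x y := by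
  simp only [suppSize, card_filter]
  rw [← Equiv.sum_comp g.1]
  simp only [permuteProfile_apply]

theorem condorcetWinner_permuteProfile (R : Profile n m) (x : Fin m) :
    CondorcetWinner (permuteProfile g R) (g.2 x) ↔ CondorcetWinner R x := by
  rw [CondorcetWinner, g.2.surjective.forall]
  simp only [suppSize_permuteProfile, g.2.injective.ne_iff, CondorcetWinner]

theorem sdPref_permuteProfile (R : Profile n m) (i : Fin n) (p q : Fin m → ℝ) :
    SDPref (permuteProfile g R) (g.1 i) p q ↔ SDPref R i (p ∘ g.2) (q ∘ g.2) := by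
  have sum_upper (r : Fin m → ℝ) (x : Fin m) :
      ∑ y with permuteProfile g R (g.1 i) y < permuteProfile g R (g.1 i) (g.2 x), r y =
        ∑ y with R i y < R i x, (r ∘ g.2) y := by
    rw [sum_filter, sum_filter, ← Equiv.sum_comp g.2]
    simp only [permuteProfile_apply, Function.comp_apply]
  rw [SDPref, g.2.surjective.forall]
  simp only [sum_upper, SDPref]

/-- The scheme that permutes voters and alternatives by `g`, applies `F`, and translates the
outcome back to the original alternatives. Schemes carry a right action this way:
`g * h` conjugates by `g` first and then by `h`. -/
def conjugate (F : Profile n m → Fin m → ℝ) : Profile n m → Fin m → ℝ :=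
  fun R ↦ F (permuteProfile g R) ∘ g.2

theorem conjugate_conjugate (h : Equiv.Perm (Fin n) × Equiv.Perm (Fin m))
    (F : Profile n m → Fin m → ℝ) : conjugate h (conjugate g F) = conjugate (g * h) F :=
  rfl

variable {F : Profile n m → Fin m → ℝ}

theorem IsSDS.conjugate (hF : IsSDS F) : IsSDS (conjugate g F) :=
  ⟨fun _ _ ↦ hF.1 _ _, fun R ↦ (Equiv.sum_comp g.2 _).trans (hF.2 (permuteProfile g R))⟩

theorem Strategyproof.conjugate (hF : Strategyproof F) : Strategyproof (conjugate g F) := by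
  intro R R' i hR
  refine (sdPref_permuteProfile g R i _ _).1 (hF _ _ _ fun j hj ↦ ?_)
  have agree : R (g.1.symm j) = R' (g.1.symm j) := hR _ (mt g.1.symm_apply_eq.1 hj)
  simp only [permuteProfile, relabel, agree]

theorem CondorcetConsistent.conjugate {α : ℝ} (hF : CondorcetConsistent F α) :
    CondorcetConsistent (conjugate g F) α :=
  fun R x hx ↦ hF _ _ ((condorcetWinner_permuteProfile g R x).2 hx)

theorem anonymous_of_conjugate_eq (hF : ∀ g, conjugate g F = F) : Anonymous F :=
  fun π ↦ congrFun (hF (π.symm, 1))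

theorem neutral_of_conjugate_eq (hF : ∀ g, conjugate g F = F) : Neutral F :=
  fun τ R ↦ congrFun (congrFun (hF (1, τ)) R)

end Permutation

section Symmetrization

open scoped BigOperators

variable {n m : ℕ}

/-- The uniform average of all conjugates of `F`, which is invariant under permuting voters and
alternatives. -/
def symmetrize (F : Profile n m → Fin m → ℝ) : Profile n m → Fin m → ℝ :=
  𝔼 g, conjugate g F

theorem symmetrize_mem_of_convex {F : Profile n m → Fin m → ℝ}
    {s : Set (Profile n m → Fin m → ℝ)} (hs : Convex ℝ s) (hF : ∀ g, conjugate g F ∈ s) :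
    symmetrize F ∈ s :=
  expect_mem_of_convex hs univ_nonempty fun g _ ↦ hF g

theorem conjugate_symmetrize (g : Equiv.Perm (Fin n) × Equiv.Perm (Fin m))
    (F : Profile n m → Fin m → ℝ) : conjugate g (symmetrize F) = symmetrize F :=
  calc conjugate g (symmetrize F)
    _ = 𝔼 h, conjugate g (conjugate h F) := by
      ext R x
      simp only [symmetrize, conjugate, Function.comp_apply, expect_apply]
    _ = 𝔼 h, conjugate (h * g) F := by simp only [conjugate_conjugate]
    _ = symmetrize F := Fintype.expect_equiv (Equiv.mulRight g) _ _ fun _ ↦ rfl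

end Symmetrization

/-- If there is a strategyproof and `α`-Condorcet-consistent SDS
(for `n` voters and `m` alternatives, `α ∈ [0,1]`), then there is also a
strategyproof SDS for the same `n` and `m` that is anonymous, neutral, and
`α`-Condorcet-consistent. -/
theorem exists_anonymous_neutral_of_exists (n m : ℕ) (α : ℝ)
    (hα0 : 0 ≤ α) (hα1 : α ≤ 1)
    (h : ∃ F : Profile n m → Fin m → ℝ,
      IsSDS F ∧ Strategyproof F ∧ CondorcetConsistent F α) :
    ∃ F : Profile n m → Fin m → ℝ,
      IsSDS F ∧ Strategyproof F ∧ Anonymous F ∧ Neutral F ∧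
        CondorcetConsistent F α := by
  obtain ⟨F, hSDS, hSP, hCC⟩ := h
  have invariant (g) : conjugate g (symmetrize F) = symmetrize F := conjugate_symmetrize g F
  exact ⟨symmetrize F,
    symmetrize_mem_of_convex convex_setOf_isSDS fun g ↦ hSDS.conjugate g,
    symmetrize_mem_of_convex convex_setOf_strategyproof fun g ↦ hSP.conjugate g,
    anonymous_of_conjugate_eq invariant,
    neutral_of_conjugate_eq invariant,
    symmetrize_mem_of_convex (convex_setOf_condorcetConsistent α) fun g ↦ hCC.conjugate g⟩
end
end

section
/- Let m ≥ 3 and n ≥ 3. No point voting SDS is α-Condorcet-consistent for any α ≥ 2/m; that is, for every point voting SDS f there exist a profile R and an alternative x that is the Condorcet winner in R such that f(R,x) < 2/m. -/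
open Finset

noncomputable section

/-!
Describe a profile by the sets `S i` of alternatives that voter `i` places above a fixed `x`: then
`x` has rank `#(S i)`, and `x` is the Condorcet winner iff every other alternative lies in fewer
than half of the `S i`.

If two voters split a block of `b` alternatives into parts of sizes `r` and `b - r`, averaging over
`r` shows that some split costs at most `2 / (b + 1)` of the total score. Cut the `m - 1` opponents
of `x` into two nearly equal blocks, let one pair of voters split the first block and all remaining
pairs split the second. Each pair then costs at most `4 / m` of the total score, and the pair on
the larger block costs strictly less. This settles even `n ≥ 4`; for odd `n`, remove from the
profile with `n + 1` voters a voter who gives `x` the highest score.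
-/

/-- No element belongs to half or more of the members of `S`. When `S i` collects the alternatives
voter `i` prefers to `x`, this says that every opponent of `x` loses to `x` in pairwise
comparison. -/
def IsMinorityFamily {ι α : Type*} [Fintype ι] [DecidableEq α] (S : ι → Finset α) : Prop :=
  ∀ y, 2 * #{i | y ∈ S i} < Fintype.card ι

section Profiles

variable {n m : ℕ}

theorem exists_perm_lt_iff_mem {S : Finset (Fin m)} {x : Fin m} (hx : x ∉ S) :
    ∃ σ : Equiv.Perm (Fin m), ∀ y, σ y < σ x ↔ y ∈ S := by
  let tier : Fin m → ℕ := fun y => if y ∈ S then 0 else if y = x then 1 else 2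
  have tier_mono : ∀ {y z}, (Tuple.sort tier).symm y ≤ (Tuple.sort tier).symm z →
      tier y ≤ tier z := fun {y z} h => by
    simpa using Tuple.monotone_sort tier h
  refine ⟨(Tuple.sort tier).symm, fun y => ⟨fun hlt => ?_, fun hy => ?_⟩⟩
  · have hyx : y ≠ x := fun h => hlt.ne (congrArg _ h)
    by_contra hy
    have := tier_mono hlt.le
    simp [tier, hy, hyx, hx] at this
  · by_contra! hle
    have := tier_mono hle
    simp [tier, hy, hx] at this

theorem val_eq_card_of_lt_iff_mem {σ : Equiv.Perm (Fin m)} {S : Finset (Fin m)} {x : Fin m}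
    (h : ∀ y, σ y < σ x ↔ y ∈ S) : (σ x : ℕ) = #S := by
  have hS : S.map σ.toEmbedding = Iio (σ x) := by
    ext z
    simp [mem_map_equiv, ← h]
  rw [← Fin.card_Iio, ← hS, card_map]

theorem suppSize_add_suppSize (R : Profile n m) {x y : Fin m} (hxy : x ≠ y) :
    suppSize R x y + suppSize R y x = n := by
  have hflip : ∀ i, R i y < R i x ↔ ¬ R i x < R i y := fun i => by
    rw [not_lt, ((R i).injective.ne hxy.symm).le_iff_lt]
  simp only [suppSize, hflip, card_filter_add_card_filter_not, card_univ, Fintype.card_fin]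

theorem condorcetWinner_iff_two_mul_suppSize_lt {R : Profile n m} {x : Fin m} :
    CondorcetWinner R x ↔ ∀ y, y ≠ x → 2 * suppSize R y x < n := by
  refine forall₂_congr fun y hy => ?_
  have := suppSize_add_suppSize R hy
  omega

theorem exists_profile_condorcetWinner_of_isMinorityFamily {S : Fin n → Finset (Fin m)}
    {x : Fin m} (hx : ∀ i, x ∉ S i) (hS : IsMinorityFamily S) :
    ∃ R : Profile n m, CondorcetWinner R x ∧ ∀ i, (R i x : ℕ) = #(S i) := by
  choose R hR using fun i => exists_perm_lt_iff_mem (hx i)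
  refine ⟨R, condorcetWinner_iff_two_mul_suppSize_lt.mpr fun y _ => ?_,
    fun i => val_eq_card_of_lt_iff_mem (hR i)⟩
  simpa only [suppSize, hR, Fintype.card_fin] using hS y

end Profiles

section Averaging

variable {K : Type*} [CommRing K] [LinearOrder K] [IsStrictOrderedRing K]

theorem exists_le_mul_add_reflect_le (a : ℕ → K) (b : ℕ) :
    ∃ r ≤ b, (b + 1) * (a r + a (b - r)) ≤ 2 * ∑ k ∈ range (b + 1), a k := by
  have hsum : ∑ r ∈ range (b + 1), (b + 1) * (a r + a (b - r)) =
      ∑ _r ∈ range (b + 1), 2 * ∑ k ∈ range (b + 1), a k := by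
    have hreflect := sum_range_reflect a (b + 1)
    rw [Nat.add_sub_cancel] at hreflect
    rw [← mul_sum, sum_add_distrib, hreflect, sum_const, card_range, nsmul_eq_mul]
    push_cast
    ring
  obtain ⟨r, hr, hle⟩ := exists_le_of_sum_le nonempty_range_add_one hsum.le
  exact ⟨r, mem_range_succ_iff.mp hr, hle⟩

theorem exists_succ_mul_sum_succAbove_le {n : ℕ} (f : Fin (n + 1) → K) :
    ∃ j : Fin (n + 1), (n + 1) * ∑ i, f (j.succAbove i) ≤ n * ∑ i, f i := by
  obtain ⟨j, hj⟩ := Finite.exists_max f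
  have hle : ∑ i, f (j.succAbove i) ≤ n * f j := by
    simpa using sum_le_card_nsmul univ (fun i => f (j.succAbove i)) (f j) fun i _ => hj _
  refine ⟨j, ?_⟩
  rw [Fin.sum_univ_succAbove f j]
  linear_combination hle

end Averaging

section MinorityFamilies

variable {α : Type*} [DecidableEq α]

theorem card_filter_mem_append_sdiff {k : ℕ} {S B : Fin k → Finset α} (hSB : ∀ j, S j ⊆ B j)
    (y : α) : #{i | y ∈ Fin.append S (fun j => B j \ S j) i} = #{j | y ∈ B j} := by
  simp only [card_filter, Fin.sum_univ_add, Fin.append_left, Fin.append_right, ← sum_add_distrib]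
  refine sum_congr rfl fun j _ => ?_
  have := @hSB j y
  by_cases hyS : y ∈ S j <;> simp_all

theorem isMinorityFamily_append_sdiff {k : ℕ} {S B : Fin k → Finset α} (hSB : ∀ j, S j ⊆ B j)
    (hB : ∀ y, ∃ j, y ∉ B j) : IsMinorityFamily (Fin.append S fun j => B j \ S j) := by
  intro y
  obtain ⟨j, hj⟩ := hB y
  have hlt : #{j | y ∈ B j} < k := by
    simpa using card_lt_univ_of_notMem (s := {j | y ∈ B j}) (x := j) (by simpa using hj)
  rw [card_filter_mem_append_sdiff hSB, Fintype.card_fin]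
  omega

theorem IsMinorityFamily.comp_succAbove {n : ℕ} {S : Fin (n + 1) → Finset α}
    (hS : IsMinorityFamily S) (hn : Odd n) (j : Fin (n + 1)) :
    IsMinorityFamily (S ∘ j.succAbove) := by
  intro y
  have hle : #{i | y ∈ S (j.succAbove i)} ≤ #{i | y ∈ S i} :=
    card_le_card_of_injOn j.succAbove (fun i hi => by simpa using hi)
      Fin.succAbove_right_injective.injOn
  have := hS y
  obtain ⟨k, rfl⟩ := hn
  simp only [Fintype.card_fin, Function.comp_apply] at this ⊢
  omega

variable {K : Type*} [CommRing K] [LinearOrder K] [IsStrictOrderedRing K] {a : ℕ → K}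

theorem exists_subset_card_add_one_mul_le (a : ℕ → K) (B : Finset α) :
    ∃ S ⊆ B, (#B + 1) * (a #S + a #(B \ S)) ≤ 2 * ∑ k ∈ range (#B + 1), a k := by
  obtain ⟨r, hr, hle⟩ := exists_le_mul_add_reflect_le a #B
  obtain ⟨S, hSB, rfl⟩ := exists_subset_card_eq hr
  exact ⟨S, hSB, by rwa [card_sdiff_of_subset hSB]⟩

variable {D : Finset α}

theorem exists_subset_mul_le_and_lt {B : Finset α} (hBD : B ⊆ D) (ha : ∀ k ≤ #D, 0 ≤ a k)
    (hpos : 0 < ∑ k ∈ range (#D + 1), a k) (hB : #D + 1 ≤ 2 * (#B + 1)) :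
    ∃ S ⊆ B, (#D + 1) * (a #S + a #(B \ S)) ≤ 4 * ∑ k ∈ range (#D + 1), a k ∧
      (#D + 1 < 2 * (#B + 1) →
        (#D + 1) * (a #S + a #(B \ S)) < 4 * ∑ k ∈ range (#D + 1), a k) := by
  obtain ⟨S, hSB, hS⟩ := exists_subset_card_add_one_mul_le a B
  have hrange : ∑ k ∈ range (#B + 1), a k ≤ ∑ k ∈ range (#D + 1), a k :=
    sum_le_sum_of_subset_of_nonneg (range_mono (by gcongr))
      fun k hk _ => ha k (mem_range_succ_iff.mp hk)
  have hcost : 0 ≤ a #S + a #(B \ S) :=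
    add_nonneg (ha _ (card_le_card (hSB.trans hBD)))
      (ha _ (card_le_card (sdiff_subset.trans hBD)))
  have hB' : (#D + 1 : K) ≤ 2 * (#B + 1) := mod_cast hB
  refine ⟨S, hSB, by linarith [mul_le_mul_of_nonneg_right hB' hcost], fun hlt => ?_⟩
  have hlt' : (#D + 1 : K) < 2 * (#B + 1) := mod_cast hlt
  rcases hcost.eq_or_lt with hzero | hcost
  · rw [← hzero]
    linarith
  · linarith [mul_lt_mul_of_pos_right hlt' hcost]

theorem exists_isMinorityFamily_of_blocks {k : ℕ} {B : Fin k → Finset α} (hBD : ∀ j, B j ⊆ D)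
    (hmiss : ∀ y, ∃ j, y ∉ B j) (hhalf : ∀ j, #D + 1 ≤ 2 * (#(B j) + 1))
    (hbig : ∃ j, #D + 1 < 2 * (#(B j) + 1)) (ha : ∀ r ≤ #D, 0 ≤ a r)
    (hpos : 0 < ∑ r ∈ range (#D + 1), a r) :
    ∃ S : Fin (k + k) → Finset α, (∀ i, S i ⊆ D) ∧ IsMinorityFamily S ∧
      (#D + 1) * ∑ i, a #(S i) < 2 * (k + k : ℕ) * ∑ r ∈ range (#D + 1), a r := by
  choose S hSB hle hlt using fun j => exists_subset_mul_le_and_lt (hBD j) ha hpos (hhalf j)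
  refine ⟨Fin.append S fun j => B j \ S j, ?_, isMinorityFamily_append_sdiff hSB hmiss, ?_⟩
  · refine Fin.addCases (fun j => ?_) fun j => ?_
    · rw [Fin.append_left]
      exact (hSB j).trans (hBD j)
    · rw [Fin.append_right]
      exact sdiff_subset.trans (hBD j)
  · calc (#D + 1) * ∑ i, a #(Fin.append S (fun j => B j \ S j) i)
        = ∑ j, (#D + 1) * (a #(S j) + a #(B j \ S j)) := by
          simp only [Fin.sum_univ_add, Fin.append_left, Fin.append_right, ← sum_add_distrib,
            mul_sum]
      _ < ∑ _j : Fin k, 4 * ∑ r ∈ range (#D + 1), a r :=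
          sum_lt_sum (fun j _ => hle j) (hbig.imp fun j hj => ⟨mem_univ j, hlt j hj⟩)
      _ = 2 * (k + k : ℕ) * ∑ r ∈ range (#D + 1), a r := by
          rw [sum_const, card_univ, Fintype.card_fin, nsmul_eq_mul]
          push_cast
          ring

theorem exists_isMinorityFamily_of_even {n : ℕ} (hn : Even n) (hn3 : 3 ≤ n)
    (ha : ∀ k ≤ #D, 0 ≤ a k) (hpos : 0 < ∑ k ∈ range (#D + 1), a k) :
    ∃ S : Fin n → Finset α, (∀ i, S i ⊆ D) ∧ IsMinorityFamily S ∧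
      (#D + 1) * ∑ i, a #(S i) < 2 * n * ∑ k ∈ range (#D + 1), a k := by
  obtain ⟨k, rfl⟩ := hn
  obtain ⟨l, rfl⟩ : ∃ l, k = l + 2 := ⟨k - 2, by omega⟩
  obtain ⟨H, hHD, hH⟩ := exists_subset_card_eq (show (#D + 1) / 2 ≤ #D by omega)
  have hHc : #(D \ H) = #D - (#D + 1) / 2 := by rw [card_sdiff_of_subset hHD, hH]
  refine exists_isMinorityFamily_of_blocks (B := Fin.cons H fun _ : Fin (l + 1) => D \ H)
    (Fin.cases hHD fun _ => sdiff_subset) (fun y => ?_) (Fin.cases ?_ fun _ => ?_) ⟨0, ?_⟩ ha hpos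
  · by_cases hy : y ∈ H
    · exact ⟨1, fun h => (mem_sdiff.mp h).2 hy⟩
    · exact ⟨0, hy⟩
  all_goals simp only [Fin.cons_zero, Fin.cons_succ, hH, hHc]; omega

theorem exists_isMinorityFamily {n : ℕ} (hn : 3 ≤ n) (ha : ∀ k ≤ #D, 0 ≤ a k)
    (hpos : 0 < ∑ k ∈ range (#D + 1), a k) :
    ∃ S : Fin n → Finset α, (∀ i, S i ⊆ D) ∧ IsMinorityFamily S ∧
      (#D + 1) * ∑ i, a #(S i) < 2 * n * ∑ k ∈ range (#D + 1), a k := by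
  rcases n.even_or_odd with heven | hodd
  · exact exists_isMinorityFamily_of_even heven hn ha hpos
  obtain ⟨S, hSD, hS, hlt⟩ :=
    exists_isMinorityFamily_of_even hodd.add_one (by omega) ha hpos
  obtain ⟨j, hj⟩ := exists_succ_mul_sum_succAbove_le fun i => a #(S i)
  refine ⟨S ∘ j.succAbove, fun i => hSD _, hS.comp_succAbove hodd j, ?_⟩
  have hn0 : (0 : K) < n := mod_cast (by omega : 0 < n)
  refine lt_of_mul_lt_mul_left ?_ (by positivity : (0 : K) ≤ n + 1)
  calc (n + 1) * ((#D + 1) * ∑ i, a #(S (j.succAbove i)))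
      = (#D + 1) * ((n + 1) * ∑ i, a #(S (j.succAbove i))) := by ring
    _ ≤ (#D + 1) * (n * ∑ i, a #(S i)) := by gcongr
    _ = n * ((#D + 1) * ∑ i, a #(S i)) := by ring
    _ < n * (2 * (n + 1 : ℕ) * ∑ k ∈ range (#D + 1), a k) :=
        mul_lt_mul_of_pos_left hlt hn0
    _ = (n + 1) * (2 * n * ∑ k ∈ range (#D + 1), a k) := by
        push_cast
        ring

end MinorityFamilies

theorem pointVoting_not_condorcet_consistent_general {K : Type*} [CommRing K] [LinearOrder K]
    [IsStrictOrderedRing K] {n m : ℕ} (hn : 3 ≤ n) {a : ℕ → K} (ha : ∀ k < m, 0 ≤ a k)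
    (hpos : 0 < ∑ k ∈ range m, a k) :
    ∃ (R : Profile n m) (x : Fin m), CondorcetWinner R x ∧
      m * ∑ i, a (R i x) < 2 * n * ∑ k ∈ range m, a k := by
  obtain _ | d := m
  · simp at hpos
  have hD : #(univ.erase (0 : Fin (d + 1))) = d := by simp
  obtain ⟨S, hSD, hS, hlt⟩ := exists_isMinorityFamily (D := univ.erase (0 : Fin (d + 1))) hn
    (fun k hk => ha k (by omega)) (by rwa [hD])
  obtain ⟨R, hwinner, hrank⟩ := exists_profile_condorcetWinner_of_isMinorityFamily
    (fun i h0 => notMem_erase 0 univ (hSD i h0)) hS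
  refine ⟨R, 0, hwinner, ?_⟩
  simpa only [hrank, hD, Nat.cast_succ] using hlt

/-- For `m ≥ 3` and `n ≥ 3`, no point voting SDS is
`α`-Condorcet-consistent for any `α ≥ 2/m`: there is always a profile with a
Condorcet winner receiving probability `< 2/m`. -/
theorem pointVoting_not_condorcet_consistent (n m : ℕ) (hm : 3 ≤ m) (hn : 3 ≤ n)
    (pv : PointVoting n m) :
    ∃ (R : Profile n m) (x : Fin m),
      CondorcetWinner R x ∧ pvVal pv R x < 2 / (m : ℝ) := by
  have hn0 : (0 : ℝ) < n := mod_cast (by omega : 0 < n)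
  have hm0 : (0 : ℝ) < m := mod_cast (by omega : 0 < m)
  obtain ⟨R, x, hwinner, hlt⟩ := pointVoting_not_condorcet_consistent_general hn pv.nonneg
    (by rw [pv.sum_eq]; positivity)
  refine ⟨R, x, hwinner, (lt_div_iff₀' hm0).mpr ?_⟩
  rwa [pv.sum_eq, mul_one_div, mul_div_cancel_right₀ 2 hn0.ne'] at hlt
end
end
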